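/- arXiv:1903.11887 — 2 statements merged into one kernel-verified Lean document; each statement's English description precedes it below -/
import Mathlib

section
/- Dimensionally sharp subadditivity: let ρ_AB be a bipartite density operator with marginals ρ_A, ρ_B, and set D_A = (d_A−1)/d_A, D_B = (d_B−1)/d_B. If S_L(ρ_A) ≤ D_A·( S_L(ρ_B)/D_B − 1 + 2√(1 − S_L(ρ_B)/D_B) ), then S_L(ρ_AB) ≤ S_L(ρ_A) + S_L(ρ_B) − 2·D_A·D_B·(1 − √(1 − S_L(ρ_A)/D_A))·(1 − √(1 − S_L(ρ_B)/D_B)). -/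
open Matrix
open scoped ComplexOrder

noncomputable def linEntropy {n : Type*} [Fintype n] (ρ : Matrix n n ℂ) : ℝ :=
  1 - ((ρ * ρ).trace).re

noncomputable def ptraceB {dA dB : ℕ} (ρ : Matrix (Fin dA × Fin dB) (Fin dA × Fin dB) ℂ) :
    Matrix (Fin dA) (Fin dA) ℂ := fun i j => ∑ k, ρ (i, k) (j, k)

noncomputable def ptraceA {dA dB : ℕ} (ρ : Matrix (Fin dA × Fin dB) (Fin dA × Fin dB) ℂ) :
    Matrix (Fin dB) (Fin dB) ℂ := fun i j => ∑ k, ρ (k, i) (k, j)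

open scoped Kronecker

lemma aux_herm_sq {n : Type*} [Fintype n] {H : Matrix n n ℂ} (h : H.IsHermitian) :
    0 ≤ ((H * H).trace).re := by
  have h1 := (Matrix.posSemidef_conjTranspose_mul_self H).trace_nonneg
  rw [h.eq] at h1
  exact (Complex.le_def.1 h1).1

lemma aux_psd_tr {n : Type*} [Fintype n] [DecidableEq n] {P Q : Matrix n n ℂ}
    (hP : P.PosSemidef) (hQ : Q.PosSemidef) : 0 ≤ ((P * Q).trace).re := by
  open scoped MatrixOrder in
  obtain ⟨B, rfl⟩ := CStarAlgebra.nonneg_iff_eq_star_mul_self.mp hQ.nonneg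
  have h1 := (hP.mul_mul_conjTranspose_same B).trace_nonneg
  rw [Matrix.trace_mul_comm, ← mul_assoc, Matrix.trace_mul_comm] at h1
  exact (Complex.le_def.1 h1).1

lemma aux_bound {d : ℕ} (hd : 2 ≤ d) (D : ℝ) (hD : D = ((d:ℝ) - 1) / d)
    (A : Matrix (Fin d) (Fin d) ℂ) (hA : A.IsHermitian) (htr : A.trace = 0)
    (hsq : (A * A).trace = (D:ℂ)) : ((D:ℂ) • (1 : Matrix (Fin d) (Fin d) ℂ) - A).PosSemidef := by
  have hd0 : (d:ℝ) ≠ 0 := by positivity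
  have hdc : (d:ℂ) ≠ 0 := by exact_mod_cast hd0
  have hH : ((D:ℂ) • (1 : Matrix (Fin d) (Fin d) ℂ) - A).IsHermitian := by
    refine Matrix.IsHermitian.sub ?_ hA
    simp [Matrix.IsHermitian, Matrix.conjTranspose_smul]
  refine Matrix.PosSemidef.of_dotProduct_mulVec_nonneg hH fun v => ?_
  have hw0 : 0 ≤ star v ⬝ᵥ v := dotProduct_star_self_nonneg v
  obtain ⟨hw1, hw2⟩ := Complex.le_def.1 hw0
  obtain ⟨w, hw⟩ : ∃ w : ℝ, star v ⬝ᵥ v = (w:ℂ) := ⟨(star v ⬝ᵥ v).re, by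
    apply Complex.ext <;> simp; simpa using hw2.symm⟩
  have hwn : 0 ≤ w := by simpa [hw] using hw1
  have him : (star v ⬝ᵥ (A *ᵥ v)).im = 0 := hA.im_star_dotProduct_mulVec_self v
  obtain ⟨q, hq⟩ : ∃ q : ℝ, star v ⬝ᵥ (A *ᵥ v) = (q:ℂ) := ⟨(star v ⬝ᵥ (A *ᵥ v)).re, by
    apply Complex.ext <;> simp [him]⟩
  have e : star v ⬝ᵥ (((D:ℂ) • (1 : Matrix (Fin d) (Fin d) ℂ) - A) *ᵥ v) = ((D * w - q : ℝ) : ℂ) := by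
    rw [Matrix.sub_mulVec, dotProduct_sub, hq, Matrix.smul_mulVec, dotProduct_smul, Matrix.one_mulVec, hw]
    simp
  rw [e]
  rcases hwn.eq_or_lt with h0 | hpos
  · have : v = 0 := by
      rw [← h0] at hw
      exact dotProduct_star_self_eq_zero.1 (by simpa using hw)
    subst this
    rw [← e]; simp
  set V := Matrix.vecMulVec v (star v) with hV
  have hVh : V.IsHermitian := (Matrix.posSemidef_vecMulVec_self_star v).1
  have t1 : V.trace = (w:ℂ) := by rw [hV, Matrix.trace_vecMulVec, dotProduct_comm, hw]
  have t2 : (V * V).trace = (w:ℂ)^2 := by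
    rw [hV, Matrix.vecMulVec_mul_vecMulVec, Matrix.trace_vecMulVec, dotProduct_smul,
      dotProduct_comm v (star v), hw]; simp [pow_two]
  have t3 : (A * V).trace = (q:ℂ) := by
    rw [hV, Matrix.mul_vecMulVec, Matrix.trace_vecMulVec, dotProduct_comm, hq]
  have t4 : (V * A).trace = (q:ℂ) := by rw [Matrix.trace_mul_comm, t3]
  have hM : ((w:ℂ) • A - V + (w/d:ℂ) • (1 : Matrix (Fin d) (Fin d) ℂ)).IsHermitian := by
    refine Matrix.IsHermitian.add (Matrix.IsHermitian.sub ?_ hVh) ?_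
    · simp [Matrix.IsHermitian, Matrix.conjTranspose_smul, hA.eq]
    · simp [Matrix.IsHermitian, Matrix.conjTranspose_smul]
  have key := aux_herm_sq hM
  have e2 : (((w:ℂ) • A - V + (w/d:ℂ) • (1 : Matrix (Fin d) (Fin d) ℂ)) *
     ((w:ℂ) • A - V + (w/d:ℂ) • (1 : Matrix (Fin d) (Fin d) ℂ))).trace
     = ((2 * w * (D * w - q) : ℝ) : ℂ) := by
    simp only [add_mul, mul_add, sub_mul, mul_sub, smul_mul_assoc, mul_smul_comm, Matrix.trace_add,
      Matrix.trace_sub, Matrix.trace_smul, t1, t2, t3, t4, hsq, htr, one_mul, mul_one,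
      Matrix.trace_one, Fintype.card_fin, smul_eq_mul]
    rw [hD]
    push_cast
    field_simp
    ring
  rw [e2, Complex.ofReal_re] at key
  have : 0 ≤ D * w - q := by
    by_contra hh
    push Not at hh
    nlinarith [mul_pos hpos (neg_pos.2 hh)]
  exact_mod_cast this

lemma aux_decomp {d : ℕ} (hd : 2 ≤ d) (D : ℝ) (hD : D = ((d:ℝ) - 1) / d)
    (R : Matrix (Fin d) (Fin d) ℂ) (hR : R.IsHermitian) (htr : R.trace = 1) :
    ∃ (A : Matrix (Fin d) (Fin d) ℂ) (x : ℝ), x = Real.sqrt (1 - linEntropy R / D) ∧ 0 ≤ x ∧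
      linEntropy R = D * (1 - x^2) ∧ A.IsHermitian ∧ A.trace = 0 ∧ (A * A).trace = (D:ℂ) ∧
      (R * A).trace = (x * D : ℂ) := by
  have hd2 : (2:ℝ) ≤ d := by exact_mod_cast hd
  have hd0 : (d:ℝ) ≠ 0 := by positivity
  have hdc : (d:ℂ) ≠ 0 := by exact_mod_cast hd0
  have hDpos : 0 < D := by rw [hD]; apply div_pos <;> linarith
  set C := R - (1/d:ℂ) • (1 : Matrix (Fin d) (Fin d) ℂ) with hC
  have hCh : C.IsHermitian := by
    refine Matrix.IsHermitian.sub hR ?_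
    simp [Matrix.IsHermitian, Matrix.conjTranspose_smul]
  have hCt : C.trace = 0 := by simp [hC, htr, hdc]
  have hCC : (C * C).trace = (R * R).trace - 1/d := by
    simp only [hC, mul_sub, sub_mul, smul_mul_assoc, mul_smul_comm, Matrix.trace_sub, 
      Matrix.trace_smul, htr, one_mul, mul_one, Matrix.trace_one, Fintype.card_fin, smul_eq_mul]
    field_simp
    ring
  have hRC : (R * C).trace = (C * C).trace := by
    rw [hCC]
    simp only [hC, mul_sub, mul_smul_comm, Matrix.trace_sub, 
      Matrix.trace_smul, htr, mul_one, smul_eq_mul]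
  have hre := aux_herm_sq hCh
  have him : ((C * C).trace).im = 0 := by
    have h1 := (Matrix.posSemidef_conjTranspose_mul_self C).trace_nonneg
    rw [hCh.eq] at h1
    exact (Complex.le_def.1 h1).2.symm
  obtain ⟨N, hN⟩ : ∃ N : ℝ, (C * C).trace = (N:ℂ) := ⟨((C * C).trace).re, by
    apply Complex.ext <;> simp [him]⟩
  have hN0 : 0 ≤ N := by simpa [hN] using hre
  have hS : linEntropy R = D - N := by
    have : (R * R).trace = ((N + 1/d : ℝ) : ℂ) := by
      rw [hN] at hCC; push_cast; linear_combination -hCC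
    rw [linEntropy, this, Complex.ofReal_re, hD]
    field_simp
    ring
  set x := Real.sqrt (1 - linEntropy R / D) with hx
  have hx2 : x^2 = N / D := by
    have : 1 - linEntropy R / D = N / D := by rw [hS]; field_simp; ring
    rw [hx, this, Real.sq_sqrt (by positivity)]
  have hx0 : 0 ≤ x := Real.sqrt_nonneg _
  have hND : N = x^2 * D := by rw [hx2]; field_simp
  have hSx : linEntropy R = D * (1 - x^2) := by rw [hS, hND]; ring
  by_cases hz : x = 0
  · have hC0 : C = 0 := by
      have : (Cᴴ * C).trace = 0 := by rw [hCh.eq, hN, hND, hz]; simp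
      exact Matrix.trace_conjTranspose_mul_self_eq_zero_iff.1 this
    have hR' : R = (1/d:ℂ) • (1 : Matrix (Fin d) (Fin d) ℂ) := sub_eq_zero.1 (hC ▸ hC0)
    let i : Fin d := ⟨0, by omega⟩
    have hAt : (Matrix.single i i (1:ℂ) - (1/d:ℂ) • (1 : Matrix (Fin d) (Fin d) ℂ)).trace = 0 := by
      simp [Matrix.trace_sub, hdc]
    refine ⟨Matrix.single i i (1:ℂ) - (1/d:ℂ) • 1, x, rfl, hx0, hSx, ?_, hAt, ?_, ?_⟩
    · refine Matrix.IsHermitian.sub ?_ ?_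
      · simp [Matrix.IsHermitian, Matrix.conjTranspose_single]
      · simp [Matrix.IsHermitian, Matrix.conjTranspose_smul]
    · simp only [mul_sub, sub_mul, smul_mul_assoc, mul_smul_comm, Matrix.trace_sub, 
        Matrix.trace_smul, one_mul, mul_one, Matrix.trace_one, Fintype.card_fin, smul_eq_mul,
        Matrix.single_mul_single_same, Matrix.trace_single_eq_same]
      rw [hD]
      push_cast
      field_simp
      ring
    · rw [hR', smul_mul_assoc, one_mul, Matrix.trace_smul, hAt, hz]; simp
  · have hzc : (x:ℂ) ≠ 0 := by exact_mod_cast hz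
    refine ⟨(x⁻¹:ℂ) • C, x, rfl, hx0, hSx, ?_, ?_, ?_, ?_⟩
    · simp [Matrix.IsHermitian, Matrix.conjTranspose_smul, hCh.eq]
    · simp [hCt]
    · rw [smul_mul_assoc, mul_smul_comm, Matrix.trace_smul, Matrix.trace_smul, hN, hND]
      push_cast; simp only [smul_eq_mul]; field_simp
    · rw [mul_smul_comm, Matrix.trace_smul, hRC, hN, hND]
      push_cast; simp only [smul_eq_mul]; field_simp

lemma aux_ptB {dA dB : ℕ} (ρ : Matrix (Fin dA × Fin dB) (Fin dA × Fin dB) ℂ)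
    (M : Matrix (Fin dA) (Fin dA) ℂ) :
    (ρ * (M ⊗ₖ (1 : Matrix (Fin dB) (Fin dB) ℂ))).trace = (ptraceB ρ * M).trace := by
  simp only [Matrix.trace, Matrix.diag, Matrix.mul_apply, ptraceB, Fintype.sum_prod_type,
    Matrix.kroneckerMap_apply, Matrix.one_apply, mul_ite, mul_one, mul_zero, Finset.sum_ite_eq',
    Finset.mem_univ, if_true, Finset.sum_mul]
  refine Finset.sum_congr rfl fun i _ => ?_
  rw [Finset.sum_comm]

lemma aux_ptA {dA dB : ℕ} (ρ : Matrix (Fin dA × Fin dB) (Fin dA × Fin dB) ℂ)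
    (M : Matrix (Fin dB) (Fin dB) ℂ) :
    (ρ * ((1 : Matrix (Fin dA) (Fin dA) ℂ) ⊗ₖ M)).trace = (ptraceA ρ * M).trace := by
  simp only [Matrix.trace, Matrix.diag, Matrix.mul_apply, ptraceA, Fintype.sum_prod_type,
    Matrix.kroneckerMap_apply, Matrix.one_apply, ite_mul, one_mul, zero_mul, mul_ite, mul_zero,
    Finset.sum_mul]
  rw [Finset.sum_comm]
  refine Finset.sum_congr rfl fun i _ => ?_
  rw [Finset.sum_comm' (s := Finset.univ) (t := fun _ => Finset.univ) (t' := Finset.univ)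
    (s' := fun _ => Finset.univ) (by simp)]
  simp only [Finset.sum_comm (s := (Finset.univ : Finset (Fin dB)))]
  simp [Finset.sum_ite_eq']

/-- **Dimensionally sharp subadditivity.** With `D_A = (d_A-1)/d_A`,
`D_B = (d_B-1)/d_B`, if `S_L(ρ_A) ≤ D_A (S_L(ρ_B)/D_B - 1 + 2√(1 - S_L(ρ_B)/D_B))`, then
`S_L(ρ_AB) ≤ S_L(ρ_A) + S_L(ρ_B) - 2 D_A D_B (1-√(1-S_L(ρ_A)/D_A))(1-√(1-S_L(ρ_B)/D_B))`. -/
theorem dimensionally_sharp_subadditivity (dA dB : ℕ) (hA : 2 ≤ dA) (hB : 2 ≤ dB)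
    (ρ : Matrix (Fin dA × Fin dB) (Fin dA × Fin dB) ℂ)
    (hρ : ρ.PosSemidef) (hρtr : ρ.trace = 1)
    (DA DB : ℝ) (hDA : DA = ((dA : ℝ) - 1) / dA) (hDB : DB = ((dB : ℝ) - 1) / dB)
    (hcond : linEntropy (ptraceB ρ) ≤
      DA * (linEntropy (ptraceA ρ) / DB - 1 + 2 * Real.sqrt (1 - linEntropy (ptraceA ρ) / DB))) :
    linEntropy ρ ≤ linEntropy (ptraceB ρ) + linEntropy (ptraceA ρ) -
      2 * DA * DB * (1 - Real.sqrt (1 - linEntropy (ptraceB ρ) / DA)) *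
        (1 - Real.sqrt (1 - linEntropy (ptraceA ρ) / DB)) := by
  have hdA2 : (2:ℝ) ≤ dA := by exact_mod_cast hA
  have hdB2 : (2:ℝ) ≤ dB := by exact_mod_cast hB
  have hdA0 : (dA:ℝ) ≠ 0 := by positivity
  have hdB0 : (dB:ℝ) ≠ 0 := by positivity
  have hdAc : (dA:ℂ) ≠ 0 := by exact_mod_cast hdA0
  have hdBc : (dB:ℂ) ≠ 0 := by exact_mod_cast hdB0
  have hDApos : 0 < DA := by rw [hDA]; apply div_pos <;> linarith
  have hDBpos : 0 < DB := by rw [hDB]; apply div_pos <;> linarith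
  have hRA : (ptraceB ρ).IsHermitian := by
    ext i j
    simp only [Matrix.conjTranspose_apply, ptraceB, star_sum]
    exact Finset.sum_congr rfl fun k _ => hρ.1.apply _ _
  have hRB : (ptraceA ρ).IsHermitian := by
    ext i j
    simp only [Matrix.conjTranspose_apply, ptraceA, star_sum]
    exact Finset.sum_congr rfl fun k _ => hρ.1.apply _ _
  have htA : (ptraceB ρ).trace = 1 := by
    have := aux_ptB ρ 1
    rw [Matrix.one_kronecker_one, mul_one, mul_one, hρtr] at this
    exact this.symm
  have htB : (ptraceA ρ).trace = 1 := by
    have := aux_ptA ρ 1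
    rw [Matrix.one_kronecker_one, mul_one, mul_one, hρtr] at this
    exact this.symm
  obtain ⟨A, x, hx, hx0, hSA, hAh, hAt, hAA, hRAA⟩ := aux_decomp hA DA hDA _ hRA htA
  obtain ⟨B, y, hy, hy0, hSB, hBh, hBt, hBB, hRBB⟩ := aux_decomp hB DB hDB _ hRB htB
  rw [← hx, ← hy]
  rw [← hy] at hcond
  have PA := aux_bound hA DA hDA A hAh hAt hAA
  have PB := aux_bound hB DB hDB B hBh hBt hBB
  rw [← aux_ptB] at hRAA
  rw [← aux_ptA] at hRBB
  set T := ((ρ * (A ⊗ₖ B)).trace).re with hT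
  have pos := aux_psd_tr hρ (PA.kronecker PB)
  have hxy : 1 ≤ x + y := by
    rw [hSA, hSB] at hcond
    have h1 : DB * (1 - y^2) / DB = 1 - y^2 := by field_simp
    rw [h1] at hcond
    have h2 := le_of_mul_le_mul_left hcond hDApos
    nlinarith
  have pos2 : 0 ≤ DA * DB * (1 - x - y) + T := by
    have e : ((DA:ℂ) • (1 : Matrix (Fin dA) (Fin dA) ℂ) - A) ⊗ₖ
        ((DB:ℂ) • (1 : Matrix (Fin dB) (Fin dB) ℂ) - B) =
        ((DA * DB : ℝ):ℂ) • (1 : Matrix (Fin dA × Fin dB) (Fin dA × Fin dB) ℂ)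
        - (DB:ℂ) • (A ⊗ₖ 1) - (DA:ℂ) • (1 ⊗ₖ B) + A ⊗ₖ B := by
      rw [← Matrix.one_kronecker_one]
      ext ⟨i, k⟩ ⟨j, l⟩
      simp [Matrix.kroneckerMap_apply, -Matrix.kronecker_one, -Matrix.one_kronecker_one, -Matrix.kroneckerMap_one_one]
      ring
    rw [e] at pos
    simp only [mul_add, mul_sub, mul_smul_comm, mul_one, Matrix.trace_add, Matrix.trace_sub,
      Matrix.trace_smul, hRAA, hRBB, hρtr, smul_eq_mul, Complex.add_re, ← hT] at pos
    have e3 : ((((DA * DB : ℝ):ℂ) - (DB:ℂ) * (x * DA) - (DA:ℂ) * (y * DB)) : ℂ)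
      = ((DA * DB * (1 - x - y) : ℝ) : ℂ) := by push_cast; ring
    rw [e3, Complex.ofReal_re] at pos
    exact pos
  set t := T / (DA * DB) with ht
  have hTt : T = t * (DA * DB) := by rw [ht]; field_simp
  have htge : x + y - 1 ≤ t := by
    rw [ht, le_div_iff₀ (by positivity)]
    linarith
  have key : 1 / (dA * dB) + DA * x^2 / dB + DB * y^2 / dA + t^2 * (DA * DB) ≤
      ((ρ * ρ).trace).re := by
    set σ : Matrix (Fin dA × Fin dB) (Fin dA × Fin dB) ℂ :=
      ((1 / (dA * dB) : ℝ) : ℂ) • (1 ⊗ₖ 1) + ((x / dB : ℝ):ℂ) • (A ⊗ₖ 1)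
        + ((y / dA : ℝ):ℂ) • (1 ⊗ₖ B) + (t:ℂ) • (A ⊗ₖ B) with hσ
    have hkr : ∀ (M : Matrix (Fin dA) (Fin dA) ℂ) (N : Matrix (Fin dB) (Fin dB) ℂ) (r : ℝ),
        M.IsHermitian → N.IsHermitian → ((r:ℂ) • (M ⊗ₖ N)).IsHermitian := by
      intro M N r hM hN
      simp [Matrix.IsHermitian, Matrix.conjTranspose_smul, Matrix.conjTranspose_kronecker, hM.eq, hN.eq]
    have hσh : σ.IsHermitian :=
      (((hkr 1 1 _ Matrix.isHermitian_one Matrix.isHermitian_one).add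
        (hkr A 1 _ hAh Matrix.isHermitian_one)).add (hkr 1 B _ Matrix.isHermitian_one hBh)).add
        (hkr A B _ hAh hBh)
    have k := aux_herm_sq (hρ.1.sub hσh)
    have hσσ : (σ * σ).trace = ((1 / (dA * dB) + DA * x^2 / dB + DB * y^2 / dA + t^2 * (DA * DB) : ℝ) : ℂ) := by
      rw [hσ]
      simp only [mul_add, add_mul, smul_mul_assoc, mul_smul_comm, ← Matrix.mul_kronecker_mul,
        Matrix.trace_add, Matrix.trace_smul, Matrix.trace_kronecker, mul_one, one_mul,
        Matrix.trace_one, Fintype.card_fin, hAt, hBt, hAA, hBB, smul_eq_mul]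
      push_cast
      field_simp
      ring
    have hρσ : ((ρ * σ).trace).re = 1 / (dA * dB) + DA * x^2 / dB + DB * y^2 / dA + t^2 * (DA * DB) := by
      rw [hσ]
      simp only [mul_add, mul_smul_comm, Matrix.one_kronecker_one, mul_one,
        Matrix.trace_add, Matrix.trace_smul, hRAA, hRBB, hρtr, smul_eq_mul, Complex.add_re,
        Complex.re_ofReal_mul, ← hT, hTt, Complex.one_re, ← Complex.ofReal_mul, Complex.ofReal_re]
      field_simp
    rw [sub_mul, mul_sub, mul_sub, Matrix.trace_sub, Matrix.trace_sub, Matrix.trace_sub,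
      Matrix.trace_mul_comm σ ρ, hσσ, Complex.sub_re, Complex.sub_re, Complex.sub_re, hρσ,
      Complex.ofReal_re] at k
    linarith
  have ia : (1:ℝ) / dA = 1 - DA := by rw [hDA]; field_simp; ring
  have ib : (1:ℝ) / dB = 1 - DB := by rw [hDB]; field_simp; ring
  have eqn : 1 / (dA * dB) + DA * x^2 / dB + DB * y^2 / dA + t^2 * (DA * DB)
      = (1 - DA) * (1 - DB) + DA * x^2 * (1 - DB) + DB * y^2 * (1 - DA) + t^2 * (DA * DB) := by
    rw [← ia, ← ib]; field_simp
  rw [eqn] at key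
  rw [hSA, hSB, linEntropy]
  have hsq : (x + y - 1)^2 ≤ t^2 := by
    apply pow_le_pow_left₀ <;> linarith
  have := mul_le_mul_of_nonneg_left hsq (by positivity : 0 ≤ DA * DB)
  nlinarith
end

section
/- Corollary purity form of DSSA: for any bipartite density operator ρ_AB, √((d_A−1)(d_B−1) − d_A d_B S_L(ρ_AB) + d_A S_L(ρ_A) + d_B S_L(ρ_B)) ≥ √(d_B−1)·√(d_A−1 − d_A S_L(ρ_A)) + √(d_A−1)·√(d_B−1 − d_B S_L(ρ_B)) − √(d_A−1)·√(d_B−1). -/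
open Matrix
open scoped ComplexOrder

open scoped Kronecker MatrixOrder

lemma ds_cs {n : Type*} [Fintype n] (M N : Matrix n n ℂ) (hM : M.IsHermitian)
    (hN : N.IsHermitian) :
    ((M * N).trace.re) ^ 2 ≤ (M * M).trace.re * (N * N).trace.re := by
  have key : ∀ t : ℝ, 0 ≤ (N * N).trace.re * (t * t) + (2 * (M * N).trace.re) * t
      + (M * M).trace.re := by
    intro t
    have h := (posSemidef_conjTranspose_mul_self (M + t • N)).trace_nonneg
    have hH : (M + t • N)ᴴ = M + t • N := by
      rw [conjTranspose_add, conjTranspose_smul, hM.eq, hN.eq]; simp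
    rw [hH] at h
    have h2 := (Complex.le_def.1 h).1
    have hc : (N * M).trace = (M * N).trace := trace_mul_comm _ _
    simp only [add_mul, mul_add, smul_mul_assoc, mul_smul_comm, trace_add, trace_smul,
      Complex.add_re, Complex.smul_re, smul_eq_mul, hc, Complex.zero_re] at h2
    linarith
  have := discrim_le_zero key
  unfold discrim at this
  nlinarith

lemma ds_psd {n : Type*} [Fintype n] (M N : Matrix n n ℂ) (hM : M.PosSemidef)
    (hN : N.PosSemidef) : 0 ≤ (M * N).trace.re := by
  classical
  obtain ⟨B, hB⟩ := CStarAlgebra.nonneg_iff_eq_star_mul_self.1 hN.nonneg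
  have h := (hM.mul_mul_conjTranspose_same B).trace_nonneg
  have e : (M * N).trace = (B * M * Bᴴ).trace := by
    rw [hB, star_eq_conjTranspose, ← Matrix.mul_assoc, trace_mul_comm, Matrix.mul_assoc]
  rw [e]
  exact (Complex.le_def.1 h).1

lemma ds_spec {m : ℕ} (hm : 2 ≤ m) (X : Matrix (Fin m) (Fin m) ℂ) (hX : X.IsHermitian)
    (htr : X.trace = 0) (u : ℝ) (hu : 0 ≤ u)
    (h : ((m : ℝ) - 1) * (X * X).trace.re ≤ m * u ^ 2) :
    (u • (1 : Matrix (Fin m) (Fin m) ℂ) - X).PosSemidef := by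
  have hm' : (2 : ℝ) ≤ m := by exact_mod_cast hm
  have hH : (u • (1 : Matrix (Fin m) (Fin m) ℂ) - X).IsHermitian := by
    unfold IsHermitian
    rw [conjTranspose_sub, conjTranspose_smul, hX.eq]; simp
  refine PosSemidef.of_dotProduct_mulVec_nonneg hH fun x => ?_
  rw [Complex.le_def]
  refine ⟨?_, (hH.im_star_dotProduct_mulVec_self x).symm⟩
  set P := vecMulVec x (star x) with hP
  have hPH : P.IsHermitian := (posSemidef_vecMulVec_self_star x).isHermitian
  set s : ℝ := (star x ⬝ᵥ x).re with hs
  have hsc : star x ⬝ᵥ x = (s : ℂ) := by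
    have := (Complex.le_def.1 (dotProduct_star_self_nonneg x)).2
    apply Complex.ext
    · simp [hs]
    · exact this.symm
  have hs0 : 0 ≤ s := by
    have := (Complex.le_def.1 (dotProduct_star_self_nonneg x)).1
    exact this
  have hPt : P.trace = (s : ℂ) := by
    rw [hP, trace_vecMulVec, dotProduct_comm, hsc]
  have hPP : P * P = (s : ℂ) • P := by
    rw [hP, vecMulVec_mul_vecMulVec, hsc]
    ext i j
    simp [vecMulVec_apply]
    try ring
  have hXP : (X * P).trace = star x ⬝ᵥ (X *ᵥ x) := by
    rw [hP, mul_vecMulVec, trace_vecMulVec, dotProduct_comm]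
  have hNH : (P - (s / m) • (1 : Matrix (Fin m) (Fin m) ℂ)).IsHermitian := by
    unfold IsHermitian
    rw [conjTranspose_sub, conjTranspose_smul, hPH.eq]; simp
  have cs := ds_cs X _ hX hNH
  have e1 : (X * (P - (s / m) • (1 : Matrix (Fin m) (Fin m) ℂ))).trace.re
      = (star x ⬝ᵥ (X *ᵥ x)).re := by
    simp only [mul_sub, mul_smul_comm, mul_one, trace_sub, trace_smul, htr, smul_zero, sub_zero,
      hXP]
  have e2 : ((P - (s / m) • (1 : Matrix (Fin m) (Fin m) ℂ)) *
      (P - (s / m) • (1 : Matrix (Fin m) (Fin m) ℂ))).trace.re = s ^ 2 - s ^ 2 / m := by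
    simp only [mul_sub, sub_mul, mul_smul_comm, smul_mul_assoc, mul_one, one_mul, trace_sub,
      trace_smul, hPP, hPt, trace_one, Complex.sub_re, Complex.smul_re, smul_eq_mul,
      Fintype.card_fin, Complex.natCast_re, Complex.re_ofReal_mul, Complex.ofReal_re]
    field_simp
    ring
  rw [e1, e2] at cs
  have e3 : (star x ⬝ᵥ ((u • (1 : Matrix (Fin m) (Fin m) ℂ) - X) *ᵥ x)).re
      = u * s - (star x ⬝ᵥ (X *ᵥ x)).re := by
    rw [sub_mulVec, smul_mulVec, one_mulVec, dotProduct_sub, dotProduct_smul, hsc]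
    simp
  rw [e3, Complex.zero_re, sub_nonneg]
  refine (abs_le_of_sq_le_sq' ?_ (mul_nonneg hu hs0)).2
  refine cs.trans ?_
  have : (X * X).trace.re * (s ^ 2 - s ^ 2 / m)
      = (((m : ℝ) - 1) * (X * X).trace.re) * (s ^ 2 / m) := by
    field_simp
  rw [this]
  calc _ ≤ (m * u ^ 2) * (s ^ 2 / m) := mul_le_mul_of_nonneg_right h (by positivity)
    _ = _ := by field_simp

lemma ds_ptB {dA dB : ℕ} (ρ : Matrix (Fin dA × Fin dB) (Fin dA × Fin dB) ℂ)
    (P : Matrix (Fin dA) (Fin dA) ℂ) :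
    (ρ * (P ⊗ₖ (1 : Matrix (Fin dB) (Fin dB) ℂ))).trace = (ptraceB ρ * P).trace := by
  simp only [trace, diag_apply, mul_apply, Fintype.sum_prod_type, kroneckerMap_apply, ptraceB,
    one_apply, mul_ite, mul_one, mul_zero, Finset.sum_ite_eq', Finset.mem_univ, if_true,
    Finset.sum_mul]
  refine Finset.sum_congr rfl fun i _ => ?_
  rw [Finset.sum_comm]

lemma ds_ptA {dA dB : ℕ} (ρ : Matrix (Fin dA × Fin dB) (Fin dA × Fin dB) ℂ)
    (P : Matrix (Fin dB) (Fin dB) ℂ) :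
    (ρ * ((1 : Matrix (Fin dA) (Fin dA) ℂ) ⊗ₖ P)).trace = (ptraceA ρ * P).trace := by
  simp only [trace, diag_apply, mul_apply, Fintype.sum_prod_type, kroneckerMap_apply, ptraceA,
    one_apply, ite_mul, one_mul, zero_mul, mul_ite, mul_zero, Finset.sum_mul]
  rw [Finset.sum_comm]
  refine Finset.sum_congr rfl fun i _ => ?_
  rw [Finset.sum_comm (s := Finset.univ (α := Fin dB))]
  refine Finset.sum_congr rfl fun j _ => ?_
  rw [Finset.sum_comm]
  simp

lemma ds_real (α β μ ν q T : ℝ) (hα0 : 0 ≤ α) (hβ0 : 0 ≤ β) (hμ0 : 0 ≤ μ) (hν0 : 0 ≤ ν)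
    (hq0 : 0 ≤ q) (hαμ : α ^ 2 ≤ μ * α) (hβν : β ^ 2 ≤ ν * β)
    (hlow : 0 ≤ μ * α * (ν * β) - μ * α * β ^ 2 - ν * β * α ^ 2 + T)
    (hTq : T ^ 2 ≤ q * (α * β) ^ 2) : ν * α + μ * β - μ * ν ≤ Real.sqrt q := by
  have hTs : T ≤ Real.sqrt q * (α * β) := by
    refine (fun h1 h2 => abs_le_of_sq_le_sq' h1 h2 |>.2) ?_ (by positivity)
    rw [mul_pow, Real.sq_sqrt hq0]; exact hTq
  have hr0 : 0 ≤ Real.sqrt q := Real.sqrt_nonneg _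
  rcases hα0.eq_or_lt with h0 | h0
  · rw [← h0]
    have : β ≤ ν := by
      rcases hβ0.eq_or_lt with h1 | h1
      · rw [← h1]; exact hν0
      · nlinarith
    nlinarith
  rcases hβ0.eq_or_lt with h1 | h1
  · rw [← h1]
    have : α ≤ μ := by nlinarith
    nlinarith
  · have hab : 0 < α * β := by positivity
    refine le_of_mul_le_mul_right ?_ hab
    nlinarith
set_option maxHeartbeats 1000000 in
/-- Purity (square-root) form of dimensionally sharp subadditivity:
`√((d_A-1)(d_B-1) - d_A d_B S_L(ρ_AB) + d_A S_L(ρ_A) + d_B S_L(ρ_B)) ≥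
 √(d_B-1)√(d_A-1-d_A S_L(ρ_A)) + √(d_A-1)√(d_B-1-d_B S_L(ρ_B)) - √(d_A-1)√(d_B-1)`. -/
theorem dssa_sqrt_form (dA dB : ℕ) (hA : 2 ≤ dA) (hB : 2 ≤ dB)
    (ρ : Matrix (Fin dA × Fin dB) (Fin dA × Fin dB) ℂ)
    (hρ : ρ.PosSemidef) (hρtr : ρ.trace = 1) :
    Real.sqrt (((dA : ℝ) - 1) * ((dB : ℝ) - 1) - (dA : ℝ) * dB * linEntropy ρ
        + (dA : ℝ) * linEntropy (ptraceB ρ) + (dB : ℝ) * linEntropy (ptraceA ρ)) ≥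
      Real.sqrt ((dB : ℝ) - 1) * Real.sqrt ((dA : ℝ) - 1 - dA * linEntropy (ptraceB ρ))
      + Real.sqrt ((dA : ℝ) - 1) * Real.sqrt ((dB : ℝ) - 1 - dB * linEntropy (ptraceA ρ))
      - Real.sqrt ((dA : ℝ) - 1) * Real.sqrt ((dB : ℝ) - 1) := by
  have hm : (2 : ℝ) ≤ dA := by exact_mod_cast hA
  have hn : (2 : ℝ) ≤ dB := by exact_mod_cast hB
  set A := ptraceB ρ with hAdef
  set B := ptraceA ρ with hBdef
  have hAH : A.IsHermitian := by
    ext i j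
    simp only [hAdef, ptraceB, conjTranspose_apply, star_sum]
    exact Finset.sum_congr rfl fun k _ => hρ.isHermitian.apply _ _
  have hBH : B.IsHermitian := by
    ext i j
    simp only [hBdef, ptraceA, conjTranspose_apply, star_sum]
    exact Finset.sum_congr rfl fun k _ => hρ.isHermitian.apply _ _
  have hAt : A.trace = 1 := by
    have := ds_ptB ρ 1
    rw [one_kronecker_one, mul_one, mul_one] at this
    rw [hAdef, ← this, hρtr]
  have hBt : B.trace = 1 := by
    have := ds_ptA ρ 1
    rw [one_kronecker_one, mul_one, mul_one] at this
    rw [hBdef, ← this, hρtr]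
  have hpB : ∀ P, (ρ * (P ⊗ₖ (1 : Matrix (Fin dB) (Fin dB) ℂ))).trace = (A * P).trace := ds_ptB ρ
  have hpA : ∀ P, (ρ * ((1 : Matrix (Fin dA) (Fin dA) ℂ) ⊗ₖ P)).trace = (B * P).trace := ds_ptA ρ
  have hpB' : ∀ P, ((P ⊗ₖ (1 : Matrix (Fin dB) (Fin dB) ℂ)) * ρ).trace = (A * P).trace := by
    intro P; rw [trace_mul_comm, hpB]
  have hpA' : ∀ P, (((1 : Matrix (Fin dA) (Fin dA) ℂ) ⊗ₖ P) * ρ).trace = (B * P).trace := by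
    intro P; rw [trace_mul_comm, hpA]
  clear_value A B
  unfold linEntropy
  set p := (ρ * ρ).trace.re with hp
  set a := (A * A).trace.re with ha
  set b := (B * B).trace.re with hb
  set X : Matrix (Fin dA) (Fin dA) ℂ := (dA : ℝ) • A - 1 with hX
  set Y : Matrix (Fin dB) (Fin dB) ℂ := (dB : ℝ) • B - 1 with hY
  have hXH : X.IsHermitian := by
    unfold IsHermitian
    rw [hX, conjTranspose_sub, conjTranspose_smul, hAH.eq]; simp
  have hYH : Y.IsHermitian := by
    unfold IsHermitian
    rw [hY, conjTranspose_sub, conjTranspose_smul, hBH.eq]; simp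
  have hXt : X.trace = 0 := by simp [hX, hAt]
  have hYt : Y.trace = 0 := by simp [hY, hBt]
  have hXX : (X * X).trace.re = dA * (dA * a - 1) := by
    simp only [hX, mul_sub, sub_mul, mul_smul_comm, smul_mul_assoc, mul_one, one_mul, trace_sub,
      trace_smul, hAt, trace_one, Complex.sub_re, Complex.smul_re, smul_eq_mul,
      Fintype.card_fin, Complex.natCast_re, Complex.one_re, ← ha]
    ring
  have hYY : (Y * Y).trace.re = dB * (dB * b - 1) := by
    simp only [hY, mul_sub, sub_mul, mul_smul_comm, smul_mul_assoc, mul_one, one_mul, trace_sub,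
      trace_smul, hBt, trace_one, Complex.sub_re, Complex.smul_re, smul_eq_mul,
      Fintype.card_fin, Complex.natCast_re, Complex.one_re, ← hb]
    ring
  have hAX : (A * X).trace.re = dA * a - 1 := by
    simp only [hX, mul_sub, mul_smul_comm, mul_one, trace_sub,
      trace_smul, hAt, Complex.sub_re, Complex.smul_re, smul_eq_mul, Complex.one_re, ← ha]
  have hBY : (B * Y).trace.re = dB * b - 1 := by
    simp only [hY, mul_sub, mul_smul_comm, mul_one, trace_sub,
      trace_smul, hBt, Complex.sub_re, Complex.smul_re, smul_eq_mul, Complex.one_re, ← hb]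
  have ha0 : 0 ≤ dA * a - 1 := by
    have h := (Complex.le_def.1 (posSemidef_conjTranspose_mul_self X).trace_nonneg).1
    rw [hXH.eq, hXX] at h
    exact nonneg_of_mul_nonneg_right h (by linarith)
  have hb0 : 0 ≤ dB * b - 1 := by
    have h := (Complex.le_def.1 (posSemidef_conjTranspose_mul_self Y).trace_nonneg).1
    rw [hYH.eq, hYY] at h
    exact nonneg_of_mul_nonneg_right h (by linarith)
  rw [show (dA : ℝ) - 1 - dA * (1 - a) = dA * a - 1 by ring,
    show (dB : ℝ) - 1 - dB * (1 - b) = dB * b - 1 by ring,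
    show ((dA : ℝ) - 1) * ((dB : ℝ) - 1) - (dA : ℝ) * dB * (1 - p)
        + (dA : ℝ) * (1 - a) + (dB : ℝ) * (1 - b) = dA * dB * p - dA * a - dB * b + 1 by ring]
  set α := Real.sqrt (dA * a - 1) with hα
  set β := Real.sqrt (dB * b - 1) with hβ
  set μ := Real.sqrt ((dA : ℝ) - 1) with hμ
  set ν := Real.sqrt ((dB : ℝ) - 1) with hν
  have hα2 : α ^ 2 = dA * a - 1 := Real.sq_sqrt ha0
  have hβ2 : β ^ 2 = dB * b - 1 := Real.sq_sqrt hb0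
  have hμ2 : μ ^ 2 = dA - 1 := Real.sq_sqrt (by linarith)
  have hν2 : ν ^ 2 = dB - 1 := Real.sq_sqrt (by linarith)
  have hα0 : 0 ≤ α := Real.sqrt_nonneg _
  have hβ0 : 0 ≤ β := Real.sqrt_nonneg _
  have hμ0 : 0 ≤ μ := Real.sqrt_nonneg _
  have hν0 : 0 ≤ ν := Real.sqrt_nonneg _
  have hMX : ((μ * α) • (1 : Matrix (Fin dA) (Fin dA) ℂ) - X).PosSemidef := by
    refine ds_spec hA X hXH hXt _ (by positivity) (le_of_eq ?_)
    rw [hXX, mul_pow, hμ2, hα2]; ring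
  have hMY : ((ν * β) • (1 : Matrix (Fin dB) (Fin dB) ℂ) - Y).PosSemidef := by
    refine ds_spec hB Y hYH hYt _ (by positivity) (le_of_eq ?_)
    rw [hYY, mul_pow, hν2, hβ2]; ring
  have hαμ : α ^ 2 ≤ μ * α := by
    have h := ds_psd _ _ hρ (hMX.kronecker (PosSemidef.one (n := Fin dB)))
    rw [hpB, mul_sub, trace_sub, mul_smul_comm, mul_one, trace_smul, hAt, Complex.sub_re,
      hAX, Complex.smul_re] at h
    simp at h
    linarith
  have hβν : β ^ 2 ≤ ν * β := by
    have h := ds_psd _ _ hρ ((PosSemidef.one (n := Fin dA)).kronecker hMY)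
    rw [hpA, mul_sub, trace_sub, mul_smul_comm, mul_one, trace_smul, hBt, Complex.sub_re,
      hBY, Complex.smul_re] at h
    simp at h
    linarith
  set T := (ρ * (X ⊗ₖ Y)).trace.re with hT
  have sk : ∀ (P Q : Matrix (Fin dA) (Fin dA) ℂ) (R : Matrix (Fin dB) (Fin dB) ℂ),
      (P - Q) ⊗ₖ R = P ⊗ₖ R - Q ⊗ₖ R := by
    intro P Q R; ext; simp [sub_mul]
  have ks : ∀ (R : Matrix (Fin dA) (Fin dA) ℂ) (P Q : Matrix (Fin dB) (Fin dB) ℂ),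
      R ⊗ₖ (P - Q) = R ⊗ₖ P - R ⊗ₖ Q := by
    intro P Q R; ext; simp [mul_sub]
  have hlow : 0 ≤ μ * α * (ν * β) - μ * α * β ^ 2 - ν * β * α ^ 2 + T := by
    have h := ds_psd _ _ hρ (hMX.kronecker hMY)
    simp only [sk, ks, smul_kronecker, kronecker_smul, mul_sub, trace_sub, mul_smul_comm,
      trace_smul, hpA, hpB, one_kronecker_one, mul_one, hρtr, Complex.sub_re, Complex.smul_re,
      smul_eq_mul, hAX, hBY, Complex.one_re, ← hT] at h
    rw [hα2, hβ2]
    linarith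
  set C : Matrix (Fin dA × Fin dB) (Fin dA × Fin dB) ℂ :=
    ((dA : ℝ) * dB) • ρ - (dA : ℝ) • (A ⊗ₖ (1 : Matrix (Fin dB) (Fin dB) ℂ))
      - (dB : ℝ) • ((1 : Matrix (Fin dA) (Fin dA) ℂ) ⊗ₖ B) + 1 with hC
  have hCH : C.IsHermitian := by
    unfold IsHermitian
    rw [hC]
    simp only [conjTranspose_add, conjTranspose_sub, conjTranspose_smul, conjTranspose_kronecker,
      hρ.isHermitian.eq, hAH.eq, hBH.eq, conjTranspose_one, star_trivial]
  have hKH : (X ⊗ₖ Y).IsHermitian := by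
    unfold IsHermitian
    rw [conjTranspose_kronecker, hXH.eq, hYH.eq]
  have hCC : (C * C).trace.re = dA * dB * (dA * dB * p - dA * a - dB * b + 1) := by
    rw [hC]
    simp only [add_mul, mul_add, sub_mul, mul_sub, smul_mul_assoc, mul_smul_comm, trace_add,
      trace_sub, trace_smul, mul_one, one_mul, hpA, hpB, hpA', hpB', ← mul_kronecker_mul,
      trace_kronecker, hAt, hBt, trace_one, Fintype.card_prod, Fintype.card_fin, hρtr,
      Complex.add_re, Complex.sub_re, Complex.smul_re, smul_eq_mul, Complex.one_re,
      Complex.natCast_re, Complex.natCast_im, Complex.mul_re, ← ha, ← hb, ← hp, Nat.cast_mul,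
      mul_zero, sub_zero, zero_mul]
    ring
  have hCK : (C * (X ⊗ₖ Y)).trace.re = dA * dB * T := by
    rw [hC]
    simp only [add_mul, sub_mul, smul_mul_assoc, trace_add, trace_sub, trace_smul, one_mul,
      ← mul_kronecker_mul, trace_kronecker, hXt, hYt, mul_zero, zero_mul, smul_zero, sub_zero,
      add_zero, Complex.smul_re, smul_eq_mul, hT]
  have hKK : ((X ⊗ₖ Y) * (X ⊗ₖ Y)).trace.re = dA * dB * (α ^ 2 * β ^ 2) := by
    have hXi : (X * X).trace.im = 0 := by
      have h := (Complex.le_def.1 (posSemidef_conjTranspose_mul_self X).trace_nonneg).2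
      rw [hXH.eq] at h
      simpa using h.symm
    rw [← mul_kronecker_mul, trace_kronecker, Complex.mul_re, hXi, hXX, hYY, hα2, hβ2]
    ring
  have cs := ds_cs C _ hCH hKH
  rw [hCC, hCK, hKK] at cs
  set q := dA * dB * p - dA * a - dB * b + 1 with hq
  have hq0 : 0 ≤ q := by
    have h := (Complex.le_def.1 (posSemidef_conjTranspose_mul_self C).trace_nonneg).1
    rw [hCH.eq, hCC] at h
    exact nonneg_of_mul_nonneg_right h (by positivity)
  have hmn : (0 : ℝ) < dA * dB := by positivity
  have hTq : T ^ 2 ≤ q * (α * β) ^ 2 := by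
    have : (dA * dB : ℝ) ^ 2 * T ^ 2 ≤ (dA * dB : ℝ) ^ 2 * (q * (α * β) ^ 2) := by
      linear_combination cs
    exact le_of_mul_le_mul_left this (by positivity)
  exact ds_real α β μ ν q T hα0 hβ0 hμ0 hν0 hq0 hαμ hβν hlow hTq
end
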